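/- Uniform quantitative enhancement via bounded connecting paths (finite-volume core of Proposition 4.1, path side). Let (V, E, ends, α) be a finite graph with boundary condition, p ∈ (0,1), q > 0, and let L ≥ 1 be an integer. Let Ẽ ⊆ E be such that every e ∈ Ẽ admits a path γ_e ∈ Γ_{E∖Ẽ}(e) with at most L−1 edges. Set δ := |p'−p| · (min(p,p'))^{L−1}. Then: if p < p', one has φ^α_{G,p,q} ≼ P_{(p'−δ·1_{e∈Ẽ})_{e∈E}}; and if p > p', one has P_{(p'+δ·1_{e∈Ẽ})_{e∈E}} ≼ φ^α_{G,p,q}. -/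

import Mathlib

open scoped Classical

noncomputable section

namespace FKPaper

variable {V E : Type*}

/-- One-step adjacency between wired vertices through an edge in `F`. -/
def Step (ends : E → Sym2 V) (α : Setoid V) (F : Set E) (x y : Quotient α) : Prop :=
  ∃ e ∈ F, Sym2.map (Quotient.mk α) (ends e) = s(x, y)

/-- Setoid of connected components of the wired multigraph with edge set `F`. -/
def connSetoid (ends : E → Sym2 V) (α : Setoid V) (F : Set E) : Setoid (Quotient α) :=
  Relation.EqvGen.setoid (Step ends α F)

/-- Connectivity in the wired multigraph with edge set `F`. -/
def Conn (ends : E → Sym2 V) (α : Setoid V) (F : Set E) (x y : Quotient α) : Prop :=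
  (connSetoid ends α F).r x y

/-- The two endpoints of `e` are joined in the wired multigraph with edge set `F`. -/
def EndsConn (ends : E → Sym2 V) (α : Setoid V) (F : Set E) (e : E) : Prop :=
  ∀ x y : V, ends e = s(x, y) → Conn ends α F (Quotient.mk α x) (Quotient.mk α y)

/-- Number of connected components `k(ω, α)`. -/
def numComponents (ends : E → Sym2 V) (α : Setoid V) (ω : E → Bool) : ℕ :=
  Nat.card (Quotient (connSetoid ends α {e | ω e = true}))

/-- `p' = p / (p + q (1 - p))`. -/
def pPrime (p q : ℝ) : ℝ := p / (p + q * (1 - p))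

/-- Total mass of a set under a weight function. -/
def massOf {ι : Type*} [Fintype ι] (w : ι → ℝ) (A : Set ι) : ℝ :=
  ∑ x ∈ Finset.univ.filter (· ∈ A), w x

/-- Normalized probability of a set under a weight function. -/
def probOf {ι : Type*} [Fintype ι] (w : ι → ℝ) (A : Set ι) : ℝ :=
  massOf w A / massOf w Set.univ

/-- FK weight of a configuration. -/
def fkWeight [Fintype E] (ends : E → Sym2 V) (α : Setoid V) (p q : ℝ) (ω : E → Bool) : ℝ :=
  p ^ (Finset.univ.filter fun e => ω e = true).card *
    (1 - p) ^ (Finset.univ.filter fun e => ω e = false).card *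
    q ^ numComponents ends α ω

/-- The FK (random cluster) probability measure `φ^α_{G,p,q}`. -/
def fkProb [Fintype E] (ends : E → Sym2 V) (α : Setoid V) (p q : ℝ)
    (A : Set (E → Bool)) : ℝ :=
  probOf (fkWeight ends α p q) A

/-- Inhomogeneous Bernoulli weight. -/
def berWeight [Fintype E] (pe : E → ℝ) (ω : E → Bool) : ℝ :=
  ∏ e, if ω e = true then pe e else 1 - pe e

/-- Inhomogeneous Bernoulli product measure `P_{(p_e)}`. -/
def berProb [Fintype E] (pe : E → ℝ) (A : Set (E → Bool)) : ℝ :=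
  probOf (berWeight pe) A

/-- Increasing sets of configurations. -/
def Increasing (A : Set (E → Bool)) : Prop :=
  ∀ ⦃ω ω' : E → Bool⦄, ω ∈ A → (∀ e, ω e ≤ ω' e) → ω' ∈ A

/-- Stochastic domination `μ ≼ ν`. -/
def StochDom [Fintype E] (μ ν : Set (E → Bool) → ℝ) : Prop :=
  ∀ A : Set (E → Bool), Increasing A → μ A ≤ ν A

/-- `Q_F(e)`: cutsets for `e` included in `F`. -/
def Cutsets (ends : E → Sym2 V) (α : Setoid V) (F : Set E) (e : E) : Set (Set E) :=
  {χ | χ ⊆ F ∧ ¬ EndsConn ends α {e' | e' ∉ χ ∧ e' ≠ e} e}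


/-- Connectivity between wired vertices using at most `n` edges of `F`. -/
def ConnLen (ends : E → Sym2 V) (α : Setoid V) (F : Set E) :
    ℕ → Quotient α → Quotient α → Prop
  | 0, x, y => x = y
  | n + 1, x, y => x = y ∨ ∃ z, Step ends α F x z ∧ ConnLen ends α F n z y

/-- The endpoints of `e` are joined by a path of at most `n` edges of `F`. -/
def EndsConnLen (ends : E → Sym2 V) (α : Setoid V) (F : Set E) (n : ℕ) (e : E) : Prop :=
  ∀ x y : V, ends e = s(x, y) →
    ConnLen ends α F n (Quotient.mk α x) (Quotient.mk α y)

/-!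
Given all the other edges, `e` is open with conditional probability `p` or `p'`, according to
whether its endpoints are joined off `e`. Reveal the edges of `Ẽ` first and the others afterwards.
The others are open with conditional probability `p` or `p'`, so `p'` is a bound for them. For
`e ∈ Ẽ` nothing off `Ẽ` has been revealed yet, and each edge of the path `γ_e` is open with
conditional probability at least `min p p'`; hence the endpoints of `e` are joined with conditional
probability at least `(min p p') ^ (L - 1)`, which moves the probability that `e` is open from `p'`
towards `p` by at least `δ`. Revealing the edges one at a time turns these bounds into stochastic
domination.

The two directions are treated at once by multiplying every comparison with a real number `σ`,
which is `p' - p` in the end.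
-/

/-! ### Merging two classes of a setoid -/

section Merge

variable {X : Type*}

/-- The setoid obtained from `r` by merging the class of `b` into the class of `a`, realised as the
kernel of the map which redirects `⟦b⟧` to `⟦a⟧`. -/
def mergeClasses (r : Setoid X) (a b : X) : Setoid X :=
  Setoid.ker fun z => Function.update id (Quotient.mk r b) (Quotient.mk r a) (Quotient.mk r z)

lemma mergeClasses_le_iff (r t : Setoid X) (a b : X) :
    mergeClasses r a b ≤ t ↔ r ≤ t ∧ t a b := by
  constructor
  · refine fun h => ⟨fun x y hxy => h ?_, h ?_⟩
    · exact congrArg (Function.update id _ _) (Quotient.sound hxy)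
    · change Function.update id _ _ (Quotient.mk r a) = Function.update id _ _ (Quotient.mk r b)
      by_cases hab : Quotient.mk r a = Quotient.mk r b <;> simp [hab]
  · rintro ⟨hrt, hab⟩ x y hxy
    have redirect (z : X) : ∃ z', t z z' ∧
        Function.update id (Quotient.mk r b) (Quotient.mk r a) (Quotient.mk r z) =
          Quotient.mk r z' := by
      by_cases hz : Quotient.mk r z = Quotient.mk r b
      · exact ⟨a, t.trans (hrt (Quotient.exact hz)) (t.symm hab), by simp [hz]⟩
      · exact ⟨z, t.refl z, by simp [hz]⟩
    obtain ⟨x', hx, hx'⟩ := redirect x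
    obtain ⟨y', hy, hy'⟩ := redirect y
    have hxy' : r x' y' := Quotient.exact (hx'.symm.trans (hxy.trans hy'))
    exact t.trans hx (t.trans (hrt hxy') (t.symm hy))

lemma mergeClasses_eq_self {r : Setoid X} {a b : X} (h : r a b) : mergeClasses r a b = r :=
  le_antisymm ((mergeClasses_le_iff r r a b).2 ⟨le_rfl, h⟩)
    ((mergeClasses_le_iff r _ a b).1 le_rfl).1

lemma card_quotient_mergeClasses_add_one {r : Setoid X} [Finite (Quotient r)] {a b : X}
    (h : ¬ r a b) :
    Nat.card (Quotient (mergeClasses r a b)) + 1 = Nat.card (Quotient r) := by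
  have hab : Quotient.mk r a ≠ Quotient.mk r b := fun h' => h (Quotient.exact h')
  have range_eq : Set.range (fun z =>
      Function.update id (Quotient.mk r b) (Quotient.mk r a) (Quotient.mk r z)) =
        {Quotient.mk r b}ᶜ := by
    ext c
    constructor
    · rintro ⟨z, rfl⟩
      by_cases hz : Quotient.mk r z = Quotient.mk r b <;> simp [hz, hab]
    · obtain ⟨z, rfl⟩ := Quotient.exists_rep c
      exact fun hz => ⟨z, Function.update_of_ne hz _ _⟩
  rw [mergeClasses, Nat.card_congr (Setoid.quotientKerEquivRange _), range_eq,
    Nat.card_coe_set_eq, ← Set.ncard_add_ncard_compl {Quotient.mk r b}, Set.ncard_singleton,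
    add_comm]

end Merge

/-! ### Connectivity in the wired graph -/

section Connectivity

variable {ends : E → Sym2 V} {α : Setoid V} {F F' : Set E} {e : E}

lemma connSetoid_le_iff {t : Setoid (Quotient α)} :
    connSetoid ends α F ≤ t ↔ ∀ x y, Step ends α F x y → t x y :=
  Setoid.gi.gc _ _

lemma Step.conn {x y : Quotient α} (h : Step ends α F x y) : Conn ends α F x y :=
  Relation.EqvGen.rel _ _ h

lemma Conn.mono (hF : F ⊆ F') {x y : Quotient α} (h : Conn ends α F x y) :
    Conn ends α F' x y :=
  connSetoid_le_iff.2 (fun _ _ ⟨e, he, hends⟩ => Step.conn ⟨e, hF he, hends⟩) h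

lemma EndsConn.mono (hF : F ⊆ F') (h : EndsConn ends α F e) : EndsConn ends α F' e :=
  fun x y hxy => (h x y hxy).mono hF

lemma endsConn_iff {x y : V} (he : ends e = s(x, y)) :
    EndsConn ends α F e ↔ Conn ends α F (Quotient.mk α x) (Quotient.mk α y) := by
  refine ⟨fun h => h x y he, fun h x' y' he' => ?_⟩
  rcases Sym2.eq_iff.1 (he.symm.trans he') with ⟨rfl, rfl⟩ | ⟨rfl, rfl⟩
  · exact h
  · exact (connSetoid ends α F).symm h

lemma ConnLen.exists_finset {n : ℕ} {x y : Quotient α} (h : ConnLen ends α F n x y) :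
    ∃ T : Finset E, (T : Set E) ⊆ F ∧ T.card ≤ n ∧ Conn ends α T x y := by
  have trivial_path {k : ℕ} {z : Quotient α} :
      ∃ T : Finset E, (T : Set E) ⊆ F ∧ T.card ≤ k ∧ Conn ends α T z z :=
    ⟨∅, by simp, by simp, (connSetoid ends α _).refl z⟩
  induction n generalizing x with
  | zero => exact (show x = y from h) ▸ trivial_path
  | succ n ih =>
    rcases h with rfl | ⟨z, ⟨e, heF, he⟩, hzy⟩
    · exact trivial_path
    · obtain ⟨T, hTF, hTn, hT⟩ := ih hzy
      refine ⟨insert e T, ?_, (T.card_insert_le e).trans (by lia), ?_⟩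
      · simpa [Set.insert_subset_iff] using ⟨heF, hTF⟩
      · exact (connSetoid ends α _).trans (Step.conn ⟨e, by simp, he⟩) (hT.mono (by simp))

lemma EndsConnLen.exists_finset {n : ℕ} (h : EndsConnLen ends α F n e) :
    ∃ T : Finset E, (T : Set E) ⊆ F ∧ T.card ≤ n ∧ EndsConn ends α T e := by
  induction he : ends e using Sym2.ind with
  | h x y => simpa only [endsConn_iff he] using (h x y he).exists_finset

lemma connSetoid_insert {x y : V} (he : ends e = s(x, y)) :
    connSetoid ends α (insert e F) =
      mergeClasses (connSetoid ends α F) (Quotient.mk α x) (Quotient.mk α y) := by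
  refine eq_of_forall_ge_iff fun t => ?_
  rw [mergeClasses_le_iff, connSetoid_le_iff, connSetoid_le_iff]
  constructor
  · exact fun h => ⟨fun a b ⟨e', he', hab⟩ => h a b ⟨e', Or.inr he', hab⟩,
      h _ _ ⟨e, Or.inl rfl, by simp [he]⟩⟩
  · rintro ⟨hF, hxy⟩ a b ⟨e', rfl | he', hab⟩
    · rw [he, Sym2.map_mk, Sym2.eq_iff] at hab
      rcases hab with ⟨rfl, rfl⟩ | ⟨rfl, rfl⟩
      exacts [hxy, t.symm hxy]
    · exact hF a b ⟨e', he', hab⟩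

lemma connSetoid_insert_of_endsConn (h : EndsConn ends α F e) :
    connSetoid ends α (insert e F) = connSetoid ends α F := by
  induction he : ends e using Sym2.ind with
  | h x y => rw [connSetoid_insert he, mergeClasses_eq_self ((endsConn_iff he).1 h)]

lemma card_connSetoid_insert_add_one [Finite (Quotient α)] (h : ¬ EndsConn ends α F e) :
    Nat.card (Quotient (connSetoid ends α (insert e F))) + 1 =
      Nat.card (Quotient (connSetoid ends α F)) := by
  induction he : ends e using Sym2.ind with
  | h x y =>
    rw [connSetoid_insert he]
    exact card_quotient_mergeClasses_add_one fun h' => h ((endsConn_iff he).2 h')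

end Connectivity

/-! ### Weighted averages -/

section Expect

variable {ι : Type*} [Fintype ι] {w : ι → ℝ}

/-- Expectation with respect to the probability proportional to the weight `w`, as a linear
functional. It is `0` when the total weight vanishes. -/
def expect (w : ι → ℝ) : (ι → ℝ) →ₗ[ℝ] ℝ := (∑ x, w x)⁻¹ • ∑ x, w x • LinearMap.proj x

lemma expect_apply (w f : ι → ℝ) : expect w f = (∑ x, w x)⁻¹ * ∑ x, w x * f x := by
  simp [expect]

lemma probOf_eq_expect (w : ι → ℝ) (A : Set ι) : probOf w A = expect w (A.indicator 1) := by
  simp [probOf, massOf, expect_apply, Finset.sum_filter, Set.indicator_apply, div_eq_inv_mul]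

lemma expect_const (hw : ∑ x, w x ≠ 0) (c : ℝ) : expect w (fun _ => c) = c := by
  rw [expect_apply, ← Finset.sum_mul, inv_mul_cancel_left₀ hw]

lemma expect_mono (hw : 0 ≤ w) : Monotone (expect w) := fun f g hfg => by
  simp only [expect_apply]
  gcongr with x
  · exact inv_nonneg.2 (Finset.sum_nonneg fun x _ => hw x)
  · exact hw x
  · exact hfg x

lemma expect_nonneg (hw : 0 ≤ w) {f : ι → ℝ} (hf : 0 ≤ f) : 0 ≤ expect w f := by
  simpa using expect_mono hw hf

end Expect

/-! ### Resampling one edge -/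

section Resampling

variable {e : E}

/-- Indicator function of the event that `e` is open. -/
def openInd (e : E) : (E → Bool) → ℝ := Set.indicator {ω | ω e = true} 1

/-- Conditional probability that `e` is open given the states of all the other edges, under the
probability proportional to the weight `w`. -/
def condOpen (w : (E → Bool) → ℝ) (e : E) (ω : E → Bool) : ℝ :=
  w (Function.update ω e true) /
    (w (Function.update ω e true) + w (Function.update ω e false))

/-- The average of `f` over the state of `e`, open with probability `r`. -/
def resample (r : ℝ) (e : E) (f : (E → Bool) → ℝ) (ω : E → Bool) : ℝ :=
  r * f (Function.update ω e true) + (1 - r) * f (Function.update ω e false)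

lemma openInd_nonneg (e : E) : 0 ≤ openInd e :=
  fun _ => Set.indicator_nonneg (fun _ _ => zero_le_one) _

@[simp] lemma openInd_update_true (ω : E → Bool) :
    openInd e (Function.update ω e true) = 1 := by simp [openInd]

@[simp] lemma openInd_update_false (ω : E → Bool) :
    openInd e (Function.update ω e false) = 0 := by simp [openInd]

lemma dependsOn_openInd (e : E) : DependsOn (openInd e) {e} := fun ω ω' h => by
  simp [openInd, Set.indicator_apply, h e rfl]

lemma dependsOn_prod_openInd (T : Finset E) :
    DependsOn (∏ e ∈ T, openInd e) (T : Set E) := fun ω ω' h => by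
  simp only [Finset.prod_apply]
  exact Finset.prod_congr rfl fun e he =>
    dependsOn_openInd e fun e' he' => h e' (he' ▸ he)

lemma apply_update_of_dependsOn {f : (E → Bool) → ℝ} {R : Set E} (hf : DependsOn f R)
    (he : e ∉ R) (ω : E → Bool) (b : Bool) : f (Function.update ω e b) = f ω :=
  hf fun _ hi => Function.update_of_ne (ne_of_mem_of_not_mem hi he) _ _

lemma dependsOn_comp_update {f : (E → Bool) → ℝ} {R : Set E} (hf : DependsOn f R)
    (b : Bool) : DependsOn (fun ω => f (Function.update ω e b)) (R \ {e}) := by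
  intro ω ω' h
  refine hf fun i hi => ?_
  by_cases hie : i = e
  · simp [hie]
  · simpa [hie] using h i ⟨hi, hie⟩

lemma resample_sub_self (r : ℝ) (f : (E → Bool) → ℝ) :
    resample r e f - f =
      (fun ω => f (Function.update ω e true) - f (Function.update ω e false)) *
        (fun ω => r - openInd e ω) := by
  funext ω
  obtain ⟨ω, b, rfl⟩ : ∃ ω' b, ω = Function.update ω' e b := ⟨ω, ω e, by simp⟩
  cases b <;> simp [resample] <;> ring

lemma monotone_resample {r : ℝ} (hr : r ∈ Set.Icc 0 1) {f : (E → Bool) → ℝ}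
    (hf : Monotone f) : Monotone (resample r e f) := fun ω ω' h => by
  have hupdate (b : Bool) : f (Function.update ω e b) ≤ f (Function.update ω' e b) :=
    hf (update_le_update_iff.2 ⟨le_rfl, fun i _ => h i⟩)
  have hr' : 0 ≤ 1 - r := sub_nonneg.2 hr.2
  exact add_le_add (mul_le_mul_of_nonneg_left (hupdate true) hr.1)
    (mul_le_mul_of_nonneg_left (hupdate false) hr')

lemma dependsOn_resample {r : ℝ} {f : (E → Bool) → ℝ} {R : Set E} (hf : DependsOn f R) :
    DependsOn (resample r e f) (R \ {e}) := fun ω ω' h => by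
  simp only [resample, dependsOn_comp_update hf _ h]

lemma Increasing.monotone_indicator {A : Set (E → Bool)} (hA : Increasing A) :
    Monotone (A.indicator (1 : (E → Bool) → ℝ)) := fun ω ω' h => by
  by_cases hω : ω ∈ A
  · simp [hω, hA hω h]
  · rw [Set.indicator_of_notMem hω]
    exact Set.indicator_nonneg (fun _ _ => zero_le_one) ω'

variable [Fintype E] {w : (E → Bool) → ℝ}

-- Both sums are unchanged by the involution flipping the state of `e`.
lemma sum_congr_of_update {f g : (E → Bool) → ℝ}
    (h : ∀ ω, f (Function.update ω e true) + f (Function.update ω e false) =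
      g (Function.update ω e true) + g (Function.update ω e false)) :
    ∑ ω, f ω = ∑ ω, g ω := by
  have flip_involutive :
      Function.Involutive fun ω : E → Bool => Function.update ω e (!ω e) := fun ω => by simp
  have two_mul_sum (k : (E → Bool) → ℝ) :
      2 * ∑ ω, k ω = ∑ ω, (k (Function.update ω e true) + k (Function.update ω e false)) := by
    calc 2 * ∑ ω, k ω = ∑ ω, k ω + ∑ ω, k (Function.update ω e (!ω e)) := by
          rw [two_mul]
          exact congrArg _ (Equiv.sum_comp flip_involutive.toPerm k).symm
      _ = ∑ ω, (k (Function.update ω e true) + k (Function.update ω e false)) := by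
          rw [← Finset.sum_add_distrib]
          refine Finset.sum_congr rfl fun ω _ => ?_
          obtain ⟨ω, b, rfl⟩ : ∃ ω' b, ω = Function.update ω' e b := ⟨ω, ω e, by simp⟩
          cases b <;> simp [add_comm]
  linarith [two_mul_sum f, two_mul_sum g, Finset.sum_congr rfl fun ω (_ : ω ∈ Finset.univ) => h ω]

lemma expect_mul_openInd (hw : ∀ ω, 0 < w ω) {D : (E → Bool) → ℝ} {R : Set E}
    (hD : DependsOn D R) (he : e ∉ R) :
    expect w (D * openInd e) = expect w (D * condOpen w e) := by
  simp only [expect_apply]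
  congr 1
  refine sum_congr_of_update (e := e) fun ω => ?_
  have hpos := (add_pos (hw (Function.update ω e true)) (hw (Function.update ω e false))).ne'
  simp [condOpen, apply_update_of_dependsOn hD he]
  field_simp

lemma pow_card_mul_expect_le (hw : ∀ ω, 0 < w ω) {m : ℝ} (hm : 0 ≤ m) {T : Finset E}
    (hT : ∀ e ∈ T, ∀ ω, m ≤ condOpen w e ω) {D : (E → Bool) → ℝ} (hD₀ : 0 ≤ D)
    (hD : DependsOn D (T : Set E)ᶜ) :
    m ^ T.card * expect w D ≤ expect w (D * ∏ e ∈ T, openInd e) := by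
  induction T using Finset.induction_on with
  | empty => simp
  | insert e T heT ih =>
    have hDT : DependsOn D (T : Set E)ᶜ :=
      hD.mono (Set.compl_subset_compl.2 (by simp))
    have hT' : ∀ e' ∈ T, ∀ ω, m ≤ condOpen w e' ω := fun e' he' =>
      hT e' (Finset.mem_insert_of_mem he')
    set D' := D * ∏ e ∈ T, openInd e with hD'
    have hD'₀ : 0 ≤ D' := mul_nonneg hD₀ (Finset.prod_nonneg fun e _ => openInd_nonneg e)
    have hD'e : DependsOn D' {e}ᶜ := fun ω ω' h => by
      have hTe : (T : Set E) ⊆ {e}ᶜ := by simpa using heT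
      simp only [hD', Pi.mul_apply, hD.mono (by simp) h,
        (dependsOn_prod_openInd T).mono hTe h]
    calc m ^ (insert e T).card * expect w D
        = m * (m ^ T.card * expect w D) := by
          rw [Finset.card_insert_of_notMem heT, pow_succ']; ring
      _ ≤ m * expect w D' := mul_le_mul_of_nonneg_left (ih hT' hDT) hm
      _ = expect w (m • D') := by simp
      _ ≤ expect w (D' * condOpen w e) := expect_mono (fun ω => (hw ω).le) fun ω => by
          rw [Pi.smul_apply, smul_eq_mul, mul_comm]
          exact mul_le_mul_of_nonneg_left (hT e (Finset.mem_insert_self e T) ω) (hD'₀ ω)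
      _ = expect w (D' * openInd e) := (expect_mul_openInd hw hD'e (by simp)).symm
      _ = expect w (D * ∏ e ∈ insert e T, openInd e) := by
          rw [Finset.prod_insert heT, hD', mul_assoc, mul_comm (openInd e)]

end Resampling

/-! ### Sequential comparison with a product measure -/

section Comparison

variable [Fintype E] {w : (E → Bool) → ℝ} {pe : E → ℝ} {σ r : ℝ} {e : E} {R R' : Set E}

lemma sum_berWeight (pe : E → ℝ) : ∑ ω, berWeight pe ω = 1 := by
  have h := Finset.prod_univ_sum (fun _ : E => (Finset.univ : Finset Bool))
    (fun e b => if b = true then pe e else 1 - pe e)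
  rw [Fintype.piFinset_univ] at h
  simpa [berWeight] using h.symm

lemma berWeight_update (pe : E → ℝ) (e : E) (ω : E → Bool) (b : Bool) :
    berWeight pe (Function.update ω e b) = (if b = true then pe e else 1 - pe e) *
      ∏ e' ∈ Finset.univ.erase e, (if ω e' = true then pe e' else 1 - pe e') := by
  rw [berWeight, ← Finset.mul_prod_erase Finset.univ _ (Finset.mem_univ e),
    Function.update_self]
  congr 1
  refine Finset.prod_congr rfl fun e' he' => ?_
  rw [Function.update_of_ne (Finset.ne_of_mem_erase he')]

lemma expect_berWeight_resample (pe : E → ℝ) (e : E) (f : (E → Bool) → ℝ) :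
    expect (berWeight pe) (resample (pe e) e f) = expect (berWeight pe) f := by
  simp only [expect_apply]
  congr 1
  refine sum_congr_of_update (e := e) fun ω => ?_
  simp only [resample, berWeight_update, Function.update_idem, if_true, Bool.false_eq_true,
    if_false]
  ring

/-- Under `w`, conditionally on the edges of `R`, the edge `e` is open with probability at most `r`
if `σ > 0`, and at least `r` if `σ < 0`. The conditioning is expressed by testing against
nonnegative functions of the edges of `R`. -/
def CompareOpenProb (σ : ℝ) (w : (E → Bool) → ℝ) (r : ℝ) (e : E) (R : Set E) : Prop :=
  ∀ D : (E → Bool) → ℝ, 0 ≤ D → DependsOn D R →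
    0 ≤ σ * expect w (D * fun ω => r - openInd e ω)

/-- The restriction of `w` to the edges of `R` is stochastically dominated by (`σ > 0`), or
dominates (`σ < 0`), the product measure with parameters `pe`. -/
def CompareBernoulli (σ : ℝ) (w : (E → Bool) → ℝ) (pe : E → ℝ) (R : Set E) : Prop :=
  ∀ f : (E → Bool) → ℝ, Monotone f → DependsOn f R →
    0 ≤ σ * (expect (berWeight pe) f - expect w f)

lemma CompareOpenProb.mono (h : CompareOpenProb σ w r e R') (hR : R ⊆ R') :
    CompareOpenProb σ w r e R :=
  fun D hD₀ hD => h D hD₀ (hD.mono hR)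

lemma compareBernoulli_empty (σ : ℝ) (hw : ∑ ω, w ω ≠ 0) (pe : E → ℝ) :
    CompareBernoulli σ w pe ∅ := fun f _ hf => by
  obtain ⟨c, rfl⟩ : ∃ c, f = fun _ => c := ⟨f fun _ => false, funext fun ω => hf.empty _ _⟩
  rw [expect_const hw, expect_const (by simp [sum_berWeight])]
  simp

-- Resample `e` at rate `pe e`: the product average does not change, the `w`-average changes by
-- the discrete derivative of `f` in `e` tested against `pe e - openInd e`.
lemma CompareBernoulli.insert_of_compareOpenProb (h : CompareBernoulli σ w pe R)
    (hpe : pe e ∈ Set.Icc 0 1) (he : CompareOpenProb σ w (pe e) e R) :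
    CompareBernoulli σ w pe (insert e R) := by
  intro f hf hfR
  have hR : insert e R \ {e} ⊆ R := by simp
  have resampled := h (resample (pe e) e f) (monotone_resample hpe hf)
    ((dependsOn_resample hfR).mono hR)
  have derivative := he
    (fun ω => f (Function.update ω e true) - f (Function.update ω e false))
    (fun ω => sub_nonneg.2 (hf (update_le_update_iff'.2 (Bool.false_le _))))
    fun ω ω' hω => by
      simp only [(dependsOn_comp_update hfR _).mono hR hω]
  rw [expect_berWeight_resample] at resampled
  rw [← resample_sub_self, map_sub] at derivative
  linarith

lemma CompareBernoulli.union (h : CompareBernoulli σ w pe R) {T : Finset E}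
    (hpe : ∀ e ∈ T, pe e ∈ Set.Icc 0 1)
    (hT : ∀ e ∈ T, CompareOpenProb σ w (pe e) e (R ∪ (T \ {e}))) :
    CompareBernoulli σ w pe (R ∪ T) := by
  induction T using Finset.induction_on with
  | empty => simpa
  | insert e T heT ih =>
    rw [Finset.coe_insert, Set.union_insert]
    have hRT : CompareBernoulli σ w pe (R ∪ T) :=
      ih (fun e' he' => hpe e' (by simp [he'])) fun e' he' =>
        (hT e' (by simp [he'])).mono (by gcongr; simp)
    refine hRT.insert_of_compareOpenProb (hpe e (by simp)) ((hT e (by simp)).mono ?_)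
    simp [heT]

lemma compareBernoulli_univ (hw : ∑ ω, w ω ≠ 0) (hpe : ∀ e, pe e ∈ Set.Icc 0 1) (S : Set E)
    (hS : ∀ e ∈ S, CompareOpenProb σ w (pe e) e (S \ {e}))
    (hS' : ∀ e ∉ S, CompareOpenProb σ w (pe e) e {e}ᶜ) :
    CompareBernoulli σ w pe Set.univ := by
  have revealed_S := (compareBernoulli_empty σ hw pe).union (T := S.toFinset)
    (fun e _ => hpe e) fun e he => by simpa using hS e (by simpa using he)
  have revealed_all := revealed_S.union (T := Sᶜ.toFinset) (fun e _ => hpe e) fun e he =>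
    (hS' e (by simpa using he)).mono (by grind)
  simpa using revealed_all

lemma CompareBernoulli.berProb_sub_probOf_nonneg (h : CompareBernoulli σ w pe Set.univ)
    {A : Set (E → Bool)} (hA : Increasing A) : 0 ≤ σ * (berProb pe A - probOf w A) := by
  rw [berProb, probOf_eq_expect, probOf_eq_expect]
  exact h _ hA.monotone_indicator (dependsOn_univ _)

end Comparison

/-! ### The FK measure -/

section FK

variable {p q : ℝ}

lemma add_mul_one_sub_pos (hp : p ∈ Set.Ioo 0 1) (hq : 0 < q) : 0 < p + q * (1 - p) :=
  add_pos hp.1 (mul_pos hq (sub_pos.2 hp.2))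

lemma pPrime_mem_Ioo (hp : p ∈ Set.Ioo 0 1) (hq : 0 < q) : pPrime p q ∈ Set.Ioo 0 1 := by
  have hpos := add_mul_one_sub_pos hp hq
  refine ⟨div_pos hp.1 hpos, (div_lt_one hpos).2 ?_⟩
  exact lt_add_of_pos_right p (mul_pos hq (sub_pos.2 hp.2))

/-- Indicator function of the event that the endpoints of `e` are joined by open edges other
than `e`. -/
def joinedInd (ends : E → Sym2 V) (α : Setoid V) (e : E) : (E → Bool) → ℝ :=
  Set.indicator {ω | EndsConn ends α {e' | e' ≠ e ∧ ω e' = true} e} 1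

lemma joinedInd_nonneg (ends : E → Sym2 V) (α : Setoid V) (e : E) : 0 ≤ joinedInd ends α e :=
  fun _ => Set.indicator_nonneg (fun _ _ => zero_le_one) _

lemma prod_openInd_le_joinedInd {ends : E → Sym2 V} {α : Setoid V} {e : E} {T : Finset E}
    (heT : e ∉ T) (hT : EndsConn ends α T e) : ∏ e ∈ T, openInd e ≤ joinedInd ends α e := by
  intro ω
  rw [Finset.prod_apply]
  by_cases hopen : ∀ e' ∈ T, ω e' = true
  · have joined : EndsConn ends α {e' | e' ≠ e ∧ ω e' = true} e :=
      hT.mono fun e' he' => ⟨fun h => heT (h ▸ he'), hopen e' he'⟩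
    rw [Finset.prod_congr rfl fun e' he' => show openInd e' ω = 1 by simp [openInd, hopen e' he']]
    simp [joinedInd, joined]
  · push Not at hopen
    obtain ⟨e', he', hclosed⟩ := hopen
    rw [Finset.prod_eq_zero he' (by simp [openInd, hclosed])]
    exact joinedInd_nonneg ends α e ω

variable [Fintype E] (ends : E → Sym2 V) (α : Setoid V)

lemma fkWeight_pos (hp : p ∈ Set.Ioo 0 1) (hq : 0 < q) (ω : E → Bool) :
    0 < fkWeight ends α p q ω :=
  mul_pos (mul_pos (pow_pos hp.1 _) (pow_pos (sub_pos.2 hp.2) _)) (pow_pos hq _)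

lemma fkWeight_eq_berWeight_mul (p q : ℝ) (ω : E → Bool) :
    fkWeight ends α p q ω = berWeight (fun _ => p) ω * q ^ numComponents ends α ω := by
  simp [fkWeight, berWeight, Finset.prod_ite]

lemma condOpen_fkWeight [Finite (Quotient α)] (hp : p ∈ Set.Ioo 0 1) (hq : 0 < q) (e : E)
    (ω : E → Bool) :
    condOpen (fkWeight ends α p q) e ω =
      pPrime p q - (pPrime p q - p) * joinedInd ends α e ω := by
  set F := {e' | e' ≠ e ∧ ω e' = true} with hF
  have openSet_false : {e' | Function.update ω e false e' = true} = F := by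
    ext e'; by_cases h : e' = e <;> simp [hF, h]
  have openSet_true : {e' | Function.update ω e true e' = true} = insert e F := by
    ext e'; by_cases h : e' = e <;> simp [hF, h]
  have hp' : 0 < 1 - p := sub_pos.2 hp.2
  have hother : 0 < ∏ e' ∈ Finset.univ.erase e, (if ω e' = true then p else 1 - p) :=
    Finset.prod_pos fun e' _ => by split_ifs; exacts [hp.1, hp']
  simp only [condOpen, fkWeight_eq_berWeight_mul, berWeight_update, numComponents,
    openSet_false, openSet_true, if_true, Bool.false_eq_true, if_false]
  by_cases hjoined : EndsConn ends α F e
  · have hind : joinedInd ends α e ω = 1 := Set.indicator_of_mem hjoined _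
    rw [connSetoid_insert_of_endsConn hjoined, hind]
    field_simp
    ring
  · have hind : joinedInd ends α e ω = 0 := Set.indicator_of_notMem hjoined _
    rw [← card_connSetoid_insert_add_one hjoined, hind, mul_zero, sub_zero, pPrime, pow_succ]
    set C := ∏ e' ∈ Finset.univ.erase e, (if ω e' = true then p else 1 - p)
    set Q := q ^ Nat.card (Quotient (connSetoid ends α (insert e F)))
    calc p * C * Q / (p * C * Q + (1 - p) * C * (Q * q))
        = (C * Q * p) / (C * Q * (p + q * (1 - p))) := by congr 1 <;> ring
      _ = p / (p + q * (1 - p)) := mul_div_mul_left _ _ (mul_pos hother (pow_pos hq _)).ne'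

lemma min_le_condOpen_fkWeight [Finite (Quotient α)] (hp : p ∈ Set.Ioo 0 1) (hq : 0 < q) (e : E)
    (ω : E → Bool) : min p (pPrime p q) ≤ condOpen (fkWeight ends α p q) e ω := by
  rw [condOpen_fkWeight ends α hp hq]
  rcases Set.indicator_eq_zero_or_self {ω | EndsConn ends α {e' | e' ≠ e ∧ ω e' = true} e}
    (1 : (E → Bool) → ℝ) ω with h | h <;> simp [joinedInd, h]

lemma pow_mul_expect_le_expect_mul_joinedInd [Finite (Quotient α)] (hp : p ∈ Set.Ioo 0 1)
    (hq : 0 < q) {n : ℕ} {F : Set E} {e : E} (he : e ∉ F) (hpath : EndsConnLen ends α F n e)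
    {D : (E → Bool) → ℝ} (hD₀ : 0 ≤ D) (hD : DependsOn D Fᶜ) :
    min p (pPrime p q) ^ n * expect (fkWeight ends α p q) D ≤
      expect (fkWeight ends α p q) (D * joinedInd ends α e) := by
  obtain ⟨T, hTF, hTn, hT⟩ := hpath.exists_finset
  have hw := fkWeight_pos ends α hp hq
  have hw₀ : 0 ≤ fkWeight ends α p q := fun ω => (hw ω).le
  have hm : 0 ≤ min p (pPrime p q) := le_min hp.1.le (pPrime_mem_Ioo hp hq).1.le
  have hm' : min p (pPrime p q) ≤ 1 := (min_le_left _ _).trans hp.2.le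
  calc min p (pPrime p q) ^ n * expect (fkWeight ends α p q) D
      ≤ min p (pPrime p q) ^ T.card * expect (fkWeight ends α p q) D :=
        mul_le_mul_of_nonneg_right (pow_le_pow_of_le_one hm hm' hTn) (expect_nonneg hw₀ hD₀)
    _ ≤ expect (fkWeight ends α p q) (D * ∏ e' ∈ T, openInd e') :=
        pow_card_mul_expect_le hw hm (fun e' _ => min_le_condOpen_fkWeight ends α hp hq e') hD₀
          (hD.mono (Set.compl_subset_compl.2 hTF))
    _ ≤ expect (fkWeight ends α p q) (D * joinedInd ends α e) :=
        expect_mono hw₀ (mul_le_mul_of_nonneg_left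
          (prod_openInd_le_joinedInd (fun heT => he (hTF heT)) hT) hD₀)

lemma compareOpenProb_fkWeight [Finite (Quotient α)] (hp : p ∈ Set.Ioo 0 1) (hq : 0 < q)
    {e : E} {R : Set E} (he : e ∉ R) {t : ℝ}
    (ht : ∀ D : (E → Bool) → ℝ, 0 ≤ D → DependsOn D R →
      t * expect (fkWeight ends α p q) D ≤
        expect (fkWeight ends α p q) (D * joinedInd ends α e)) :
    CompareOpenProb (pPrime p q - p) (fkWeight ends α p q)
      (pPrime p q - (pPrime p q - p) * t) e R := by
  intro D hD₀ hD
  set σ := pPrime p q - p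
  set w := fkWeight ends α p q
  have open_eq : expect w (D * openInd e) =
      pPrime p q * expect w D - σ * expect w (D * joinedInd ends α e) := by
    have hcond : D * condOpen w e = pPrime p q • D - σ • (D * joinedInd ends α e) := by
      funext ω
      simp only [Pi.mul_apply, condOpen_fkWeight ends α hp hq, Pi.sub_apply, Pi.smul_apply,
        smul_eq_mul, w, σ]
      ring
    rw [expect_mul_openInd (fkWeight_pos ends α hp hq) hD he, hcond]
    simp [w]
  have test_eq : (D * fun ω => pPrime p q - σ * t - openInd e ω) =
      (pPrime p q - σ * t) • D - D * openInd e := by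
    funext ω
    simp only [Pi.mul_apply, Pi.sub_apply, Pi.smul_apply, smul_eq_mul]
    ring
  calc 0 ≤ σ ^ 2 * (expect w (D * joinedInd ends α e) - t * expect w D) :=
        mul_nonneg (sq_nonneg σ) (sub_nonneg.2 (ht D hD₀ hD))
    _ = σ * expect w (D * fun ω => pPrime p q - σ * t - openInd e ω) := by
        rw [test_eq, map_sub, map_smul, smul_eq_mul, open_eq]
        ring

lemma compareBernoulli_fkWeight [Finite (Quotient α)] (hp : p ∈ Set.Ioo 0 1) (hq : 0 < q)
    (S : Set E) (n : E → ℕ) (hpath : ∀ e ∈ S, EndsConnLen ends α Sᶜ (n e) e) :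
    CompareBernoulli (pPrime p q - p) (fkWeight ends α p q)
      (fun e => pPrime p q -
        (pPrime p q - p) * if e ∈ S then min p (pPrime p q) ^ n e else 0) Set.univ := by
  have hp' := pPrime_mem_Ioo hp hq
  have hm : 0 ≤ min p (pPrime p q) := le_min hp.1.le hp'.1.le
  have hm' : min p (pPrime p q) ≤ 1 := (min_le_left _ _).trans hp.2.le
  have hw := fkWeight_pos ends α hp hq
  refine compareBernoulli_univ (Finset.sum_pos (fun ω _ => hw ω) Finset.univ_nonempty).ne'
    (fun e => ?_) S (fun e he => ?_) fun e he => ?_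
  · have ht : (if e ∈ S then min p (pPrime p q) ^ n e else 0) ∈ Set.Icc (0 : ℝ) 1 := by
      split_ifs
      exacts [⟨pow_nonneg hm _, pow_le_one₀ hm hm'⟩, ⟨le_rfl, zero_le_one⟩]
    have between := (convex_Icc (0 : ℝ) 1).add_smul_sub_mem (Set.Ioo_subset_Icc_self hp')
      (Set.Ioo_subset_Icc_self hp) ht
    convert between using 1
    simp only [smul_eq_mul]
    ring
  · refine compareOpenProb_fkWeight ends α hp hq (by simp) fun D hD₀ hD => ?_
    rw [if_pos he]
    exact pow_mul_expect_le_expect_mul_joinedInd ends α hp hq (by simpa) (hpath e he) hD₀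
      (hD.mono (by simp))
  · refine compareOpenProb_fkWeight ends α hp hq (by simp) fun D hD₀ _ => ?_
    rw [if_neg he, zero_mul]
    exact expect_nonneg (fun ω => (hw ω).le) (mul_nonneg hD₀ (joinedInd_nonneg ends α e))

end FK

theorem uniform_enhancement_paths_general
    {V E : Type*} [Fintype E]
    (ends : E → Sym2 V) (α : Setoid V) [Finite (Quotient α)]
    (p q : ℝ) (hp : p ∈ Set.Ioo (0 : ℝ) 1) (hq : 0 < q)
    (S : Set E) (n : E → ℕ)
    (hpath : ∀ e ∈ S, EndsConnLen ends α Sᶜ (n e) e)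
    (δ : E → ℝ)
    (hδ : ∀ e, δ e = |pPrime p q - p| * (min p (pPrime p q)) ^ n e) :
    (p < pPrime p q →
      StochDom (fkProb ends α p q)
        (berProb fun e => pPrime p q - (if e ∈ S then δ e else 0))) ∧
    (pPrime p q < p →
      StochDom (berProb fun e => pPrime p q + (if e ∈ S then δ e else 0))
        (fkProb ends α p q)) := by
  have compare := compareBernoulli_fkWeight ends α hp hq S n hpath
  refine ⟨fun h A hA => ?_, fun h A hA => ?_⟩
  · have hσ : 0 < pPrime p q - p := sub_pos.2 h
    have hpe : (fun e => pPrime p q - (if e ∈ S then δ e else 0)) = fun e => pPrime p q -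
        (pPrime p q - p) * if e ∈ S then min p (pPrime p q) ^ n e else 0 := by
      simp only [hδ, abs_of_pos hσ, mul_ite, mul_zero]
    rw [hpe]
    exact sub_nonneg.1 (nonneg_of_mul_nonneg_right (compare.berProb_sub_probOf_nonneg hA) hσ)
  · have hσ : pPrime p q - p < 0 := sub_neg.2 h
    have hpe : (fun e => pPrime p q + (if e ∈ S then δ e else 0)) = fun e => pPrime p q -
        (pPrime p q - p) * if e ∈ S then min p (pPrime p q) ^ n e else 0 := by
      funext e
      rw [hδ, abs_of_neg hσ]
      split_ifs <;> ring
    rw [hpe]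
    exact sub_nonpos.1 (nonpos_of_mul_nonneg_right (compare.berProb_sub_probOf_nonneg hA) hσ)

/-- **Proposition 4.1, path side** (uniform quantitative enhancement via bounded
connecting paths). -/
theorem uniform_enhancement_paths
    {V E : Type*} [Fintype V] [Fintype E]
    (ends : E → Sym2 V) (α : Setoid V)
    (p q : ℝ) (hp : p ∈ Set.Ioo (0 : ℝ) 1) (hq : 0 < q)
    (L : ℕ) (hL : 1 ≤ L)
    (Etilde : Set E)
    (hpath : ∀ e ∈ Etilde, EndsConnLen ends α Etildeᶜ (L - 1) e)
    (δ : ℝ)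
    (hδ : δ = |pPrime p q - p| * (min p (pPrime p q)) ^ (L - 1)) :
    (p < pPrime p q →
      StochDom (fkProb ends α p q)
        (berProb fun e => pPrime p q - (if e ∈ Etilde then δ else 0))) ∧
    (pPrime p q < p →
      StochDom (berProb fun e => pPrime p q + (if e ∈ Etilde then δ else 0))
        (fkProb ends α p q)) := by
  exact uniform_enhancement_paths_general ends α p q hp hq Etilde (fun _ => L - 1) hpath
    (fun _ => δ) fun _ => hδ
end FKPaper
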